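/- arXiv:nlin/0309078 — 2 statements merged into one kernel-verified Lean document; each statement's English description precedes it below -/
import Mathlib

section
/- Define the rational functions of s ∈ ℂ: t(s) = (s−1)²(s−3)²(s²+2s+3)/(2(s²+3)³) and y(s) = (s−1)(s−3)(s²+6s+3)/(4s(s²+3)). Then for every s ∈ ℂ such that s ≠ 0, s²+3 ≠ 0, t'(s) ≠ 0, t(s) ∉ {0,1}, and y(s) ∉ {0, 1, t(s)}, the pair (t, y) is a parametric solution of the sixth Painlevé equation PVI(α,β,γ,δ) at s with θ-tuple (θ₀, θ₁, θ_t, θ_∞) = (2/3, 2/3, 2/3, 2/3), i.e. α = 1/18, β = −2/9, γ = 2/9, δ = 5/18. -/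
noncomputable def tFun8 : ℂ → ℂ := fun s => (s-1)^2*(s-3)^2*(s^2+2*s+3)/(2*(s^2+3)^3)

noncomputable def yFun8 : ℂ → ℂ := fun s => (s-1)*(s-3)*(s^2+6*s+3)/(4*s*(s^2+3))

/-!
Both `t` and `y` are invariant under `s ↦ 3 / s`, so they are rational functions of the invariant
`x = (s ^ 2 + 3) / (2 * s)`: namely `t = (x - 2) ^ 2 * (x + 1) / (2 * x ^ 3)` and
`y = (x - 2) * (x + 3) / (2 * x)`. Being a parametric solution does not depend on the choice of
parameter, so it suffices to check the equation in `x`. There `t`, `t - 1`, `y`, `y - 1`, `y - t`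
and `dy/dt` all factor into polynomials of degree at most two, and the equation becomes a small
identity of rational functions.
-/

open Filter Topology

/-- The right-hand side of the sixth Painlevé equation with parameters `α`, `β`, `γ`, `δ`, as a
function of `t`, `y` and the value `p` of `dy/dt`. -/
noncomputable def painleveVIRHS (α β γ δ t y p : ℂ) : ℂ :=
  (1 / 2) * (1 / y + 1 / (y - 1) + 1 / (y - t)) * p ^ 2
    - (1 / t + 1 / (t - 1) + 1 / (y - t)) * p
    + (y * (y - 1) * (y - t) / (t ^ 2 * (t - 1) ^ 2)) *
      (α + β * t / y ^ 2 + γ * (t - 1) / (y - 1) ^ 2 + δ * t * (t - 1) / (y - t) ^ 2)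

/-- The pair `(t, y)` is a parametric solution of the sixth Painlevé equation at `s`. Complex
differentiability is required on a neighbourhood of `s`, in the form of analyticity at `s`, so that
no derivative in the equation takes a junk value. -/
structure IsParametricPVISolutionAt (α β γ δ : ℂ) (t y : ℂ → ℂ) (s : ℂ) : Prop where
  analyticAt_fst : AnalyticAt ℂ t s
  analyticAt_snd : AnalyticAt ℂ y s
  deriv_fst_ne_zero : deriv t s ≠ 0
  painleveVI_eq : deriv (fun u => deriv y u / deriv t u) s / deriv t s =
    painleveVIRHS α β γ δ (t s) (y s) (deriv y s / deriv t s)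

namespace IsParametricPVISolutionAt

variable {α β γ δ s : ℂ} {t y t₁ y₁ x : ℂ → ℂ}

lemma congr (h : IsParametricPVISolutionAt α β γ δ t y s) (ht : t =ᶠ[𝓝 s] t₁)
    (hy : y =ᶠ[𝓝 s] y₁) : IsParametricPVISolutionAt α β γ δ t₁ y₁ s where
  analyticAt_fst := h.analyticAt_fst.congr ht
  analyticAt_snd := h.analyticAt_snd.congr hy
  deriv_fst_ne_zero := ht.deriv_eq ▸ h.deriv_fst_ne_zero
  painleveVI_eq := by
    have slope_eq : (fun u => deriv y u / deriv t u) =ᶠ[𝓝 s] fun u => deriv y₁ u / deriv t₁ u :=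
      hy.deriv.div ht.deriv
    rw [← slope_eq.deriv_eq, ← ht.deriv_eq, ← hy.deriv_eq, ← ht.eq_of_nhds, ← hy.eq_of_nhds]
    exact h.painleveVI_eq

lemma comp (h : IsParametricPVISolutionAt α β γ δ t y (x s)) (hx : AnalyticAt ℂ x s)
    (hx' : deriv x s ≠ 0) : IsParametricPVISolutionAt α β γ δ (t ∘ x) (y ∘ x) s := by
  have deriv_comp_eventuallyEq {f : ℂ → ℂ} (hf : AnalyticAt ℂ f (x s)) :
      ∀ᶠ u in 𝓝 s, deriv (f ∘ x) u = deriv f (x u) * deriv x u := by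
    filter_upwards [hx.continuousAt.eventually hf.eventually_analyticAt, hx.eventually_analyticAt]
      with u hfu hxu using deriv_comp u hfu.differentiableAt hxu.differentiableAt
  have deriv_t := deriv_comp_eventuallyEq h.analyticAt_fst
  have deriv_y := deriv_comp_eventuallyEq h.analyticAt_snd
  have slope_comp : (fun u => deriv (y ∘ x) u / deriv (t ∘ x) u) =ᶠ[𝓝 s]
      (fun u => deriv y u / deriv t u) ∘ x := by
    filter_upwards [deriv_t, deriv_y, hx.deriv.continuousAt.eventually_ne hx'] with u htu hyu hxu
    rw [htu, hyu, mul_div_mul_right _ _ hxu, Function.comp_apply]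
  have slope_analyticAt : AnalyticAt ℂ (fun u => deriv y u / deriv t u) (x s) :=
    h.analyticAt_snd.deriv.div h.analyticAt_fst.deriv h.deriv_fst_ne_zero
  refine ⟨h.analyticAt_fst.comp hx, h.analyticAt_snd.comp hx, ?_, ?_⟩
  · rw [deriv_t.self_of_nhds]
    exact mul_ne_zero h.deriv_fst_ne_zero hx'
  · rw [slope_comp.deriv_eq, deriv_comp s slope_analyticAt.differentiableAt hx.differentiableAt,
      deriv_t.self_of_nhds, deriv_y.self_of_nhds, mul_div_mul_right _ _ hx',
      mul_div_mul_right _ _ hx', h.painleveVI_eq, Function.comp_apply, Function.comp_apply]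

end IsParametricPVISolutionAt

/-- The invariant of `s ↦ 3 / s` through which both `tFun8` and `yFun8` factor. -/
noncomputable def reducedParam (s : ℂ) : ℂ := (s ^ 2 + 3) / (2 * s)

/-- The independent variable `t` as a function of the invariant `x = reducedParam s`. -/
noncomputable def tReduced (x : ℂ) : ℂ := (x - 2) ^ 2 * (x + 1) / (2 * x ^ 3)

/-- The dependent variable `y` as a function of the invariant `x = reducedParam s`. -/
noncomputable def yReduced (x : ℂ) : ℂ := (x - 2) * (x + 3) / (2 * x)

section Reduced

variable {x : ℂ}

lemma tReduced_sub_one (hx : x ≠ 0) : tReduced x - 1 = -((x + 2) ^ 2 * (x - 1)) / (2 * x ^ 3) := by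
  rw [tReduced]
  field_simp
  ring

lemma yReduced_sub_one (hx : x ≠ 0) : yReduced x - 1 = (x + 2) * (x - 3) / (2 * x) := by
  rw [yReduced]
  field_simp
  ring

lemma yReduced_sub_tReduced (hx : x ≠ 0) :
    yReduced x - tReduced x = (x - 2) * (x + 2) * (x ^ 2 + 1) / (2 * x ^ 3) := by
  rw [yReduced, tReduced]
  field_simp
  ring

lemma analyticAt_tReduced (hx : x ≠ 0) : AnalyticAt ℂ tReduced x := by
  unfold tReduced
  fun_prop (disch := simpa using hx)

lemma analyticAt_yReduced (hx : x ≠ 0) : AnalyticAt ℂ yReduced x := by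
  unfold yReduced
  fun_prop (disch := simpa using hx)

lemma deriv_tReduced (hx : x ≠ 0) : deriv tReduced x = 3 * ((x - 2) * (x + 2)) / (2 * x ^ 4) := by
  unfold tReduced
  simp (disch := first | fun_prop | simpa using hx) only [deriv_fun_div,
    deriv_fun_mul, deriv_fun_pow, deriv_fun_sub, deriv_fun_add, deriv_id'', deriv_const']
  field_simp
  ring

lemma deriv_yReduced (hx : x ≠ 0) : deriv yReduced x = (x ^ 2 + 6) / (2 * x ^ 2) := by
  unfold yReduced
  simp (disch := first | fun_prop | simpa using hx) only [deriv_fun_div,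
    deriv_fun_mul, deriv_fun_sub, deriv_fun_add, deriv_id'', deriv_const', deriv_const_mul_id']
  field_simp
  ring

lemma deriv_yReduced_div_deriv_tReduced (hx : x ≠ 0) :
    deriv yReduced x / deriv tReduced x = x ^ 2 * (x ^ 2 + 6) / (3 * ((x - 2) * (x + 2))) := by
  rw [deriv_yReduced hx, deriv_tReduced hx]
  field_simp

lemma deriv_deriv_yReduced_div_deriv_tReduced (hx : x ≠ 0) (h_sub : x - 2 ≠ 0)
    (h_add : x + 2 ≠ 0) :
    deriv (fun u => deriv yReduced u / deriv tReduced u) x =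
      2 * x * (x ^ 4 - 8 * x ^ 2 - 24) / (3 * ((x - 2) * (x + 2)) ^ 2) := by
  have slope_eq : (fun u => deriv yReduced u / deriv tReduced u) =ᶠ[𝓝 x]
      fun u => u ^ 2 * (u ^ 2 + 6) / (3 * ((u - 2) * (u + 2))) :=
    (eventually_ne_nhds hx).mono fun _ => deriv_yReduced_div_deriv_tReduced
  rw [slope_eq.deriv_eq]
  simp (disch := first | fun_prop | simp [h_sub, h_add]) only [deriv_fun_div,
    deriv_fun_mul, deriv_fun_pow, deriv_fun_sub, deriv_fun_add, deriv_id'', deriv_const']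
  field_simp
  ring

lemma isParametricPVISolutionAt_reduced (hx : x ≠ 0) (ht0 : tReduced x ≠ 0) (ht1 : tReduced x ≠ 1)
    (hy0 : yReduced x ≠ 0) (hy1 : yReduced x ≠ 1) (hyt : yReduced x ≠ tReduced x) :
    IsParametricPVISolutionAt (1 / 18) (-2 / 9) (2 / 9) (5 / 18) tReduced yReduced x := by
  rw [← sub_ne_zero, tReduced_sub_one hx] at ht1
  rw [← sub_ne_zero, yReduced_sub_one hx] at hy1
  rw [← sub_ne_zero, yReduced_sub_tReduced hx] at hyt
  simp only [tReduced, yReduced, div_ne_zero_iff, mul_ne_zero_iff, neg_ne_zero]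
    at ht0 ht1 hy0 hy1 hyt
  obtain ⟨⟨-, h_add_one⟩, -⟩ := ht0
  obtain ⟨⟨-, h_sub_one⟩, -⟩ := ht1
  obtain ⟨⟨-, h_add_three⟩, -⟩ := hy0
  obtain ⟨⟨-, h_sub_three⟩, -⟩ := hy1
  obtain ⟨⟨⟨h_sub_two, h_add_two⟩, h_sq_add_one⟩, -⟩ := hyt
  have rhs_eq : painleveVIRHS (1 / 18) (-2 / 9) (2 / 9) (5 / 18) (tReduced x) (yReduced x)
      (deriv yReduced x / deriv tReduced x) =
        4 * x ^ 5 * (x ^ 4 - 8 * x ^ 2 - 24) / (9 * ((x - 2) * (x + 2)) ^ 3) := by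
    rw [painleveVIRHS, deriv_yReduced_div_deriv_tReduced hx, tReduced_sub_one hx,
      yReduced_sub_one hx, yReduced_sub_tReduced hx, tReduced, yReduced]
    field_simp
    ring
  refine ⟨analyticAt_tReduced hx, analyticAt_yReduced hx, ?_, ?_⟩
  · rw [deriv_tReduced hx]
    simp [hx, h_sub_two, h_add_two]
  · rw [rhs_eq, deriv_deriv_yReduced_div_deriv_tReduced hx h_sub_two h_add_two, deriv_tReduced hx]
    field_simp
    ring

end Reduced

section ReducedParam

variable {s : ℂ}

lemma tReduced_reducedParam (hs : s ≠ 0) : tReduced (reducedParam s) = tFun8 s := by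
  simp only [tReduced, reducedParam, tFun8]
  field_simp
  ring

lemma yReduced_reducedParam (hs : s ≠ 0) : yReduced (reducedParam s) = yFun8 s := by
  simp only [yReduced, reducedParam, yFun8]
  field_simp
  ring

lemma analyticAt_reducedParam (hs : s ≠ 0) : AnalyticAt ℂ reducedParam s := by
  unfold reducedParam
  fun_prop (disch := simpa using hs)

end ReducedParam

/-- Parametric algebraic solution of the sixth Painlevé equation. -/
theorem stmt_8 (s : ℂ)
    (h1 : s ≠ 0)
    (h2 : s^2+3 ≠ 0)
    (hdt : deriv tFun8 s ≠ 0)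
    (ht0 : tFun8 s ≠ 0) (ht1 : tFun8 s ≠ 1)
    (hy0 : yFun8 s ≠ 0) (hy1 : yFun8 s ≠ 1) (hyt : yFun8 s ≠ tFun8 s) :
    deriv (fun u => deriv yFun8 u / deriv tFun8 u) s / deriv tFun8 s =
      (1/2) * (1/(yFun8 s) + 1/(yFun8 s - 1) + 1/(yFun8 s - tFun8 s)) *
          (deriv yFun8 s / deriv tFun8 s)^2
        - (1/(tFun8 s) + 1/(tFun8 s - 1) + 1/(yFun8 s - tFun8 s)) *
          (deriv yFun8 s / deriv tFun8 s)
        + (yFun8 s * (yFun8 s - 1) * (yFun8 s - tFun8 s) /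
            ((tFun8 s)^2 * (tFun8 s - 1)^2)) *
          ((1/18 : ℂ) + (-2/9 : ℂ) * tFun8 s / (yFun8 s)^2
            + (2/9 : ℂ) * (tFun8 s - 1) / (yFun8 s - 1)^2
            + (5/18 : ℂ) * tFun8 s * (tFun8 s - 1) / (yFun8 s - tFun8 s)^2) := by
  have hx : reducedParam s ≠ 0 := div_ne_zero h2 (mul_ne_zero two_ne_zero h1)
  have t_eq : tReduced ∘ reducedParam =ᶠ[𝓝 s] tFun8 :=
    (eventually_ne_nhds h1).mono fun _ => tReduced_reducedParam
  have y_eq : yReduced ∘ reducedParam =ᶠ[𝓝 s] yFun8 :=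
    (eventually_ne_nhds h1).mono fun _ => yReduced_reducedParam
  have hx' : deriv reducedParam s ≠ 0 := by
    rw [← t_eq.deriv_eq, deriv_comp s (analyticAt_tReduced hx).differentiableAt
      (analyticAt_reducedParam h1).differentiableAt] at hdt
    exact right_ne_zero_of_mul hdt
  rw [← tReduced_reducedParam h1] at ht0 ht1 hyt
  rw [← yReduced_reducedParam h1] at hy0 hy1 hyt
  have solution_reduced := isParametricPVISolutionAt_reduced hx ht0 ht1 hy0 hy1 hyt
  have solution := (solution_reduced.comp (analyticAt_reducedParam h1) hx').congr t_eq y_eq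
  exact solution.painleveVI_eq
end

section
/- Define the rational functions of s ∈ ℂ: t(s) = (s+1)⁴(2s−1)²/(8s³(3s²−1)) and y(s) = (3s−1)(2s−1)(s+1)³/(4s(3s²−1)(s²+1)). Then for every s ∈ ℂ such that s ≠ 0, 3s²−1 ≠ 0, s²+1 ≠ 0, t'(s) ≠ 0, t(s) ∉ {0,1}, and y(s) ∉ {0, 1, t(s)}, the pair (t, y) is a parametric solution of the sixth Painlevé equation PVI(α,β,γ,δ) at s with θ-tuple (θ₀, θ₁, θ_t, θ_∞) = (1/4, 1/4, 1/3, 1/3), i.e. α = 2/9, β = −1/32, γ = 1/32, δ = 4/9. -/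
noncomputable def tFun10 : ℂ → ℂ := fun s => (s+1)^4*(2*s-1)^2/(8*s^3*(3*s^2-1))

noncomputable def yFun10 : ℂ → ℂ := fun s => (3*s-1)*(2*s-1)*(s+1)^3/(4*s*(3*s^2-1)*(s^2+1))

/-!
The involution `s ↦ -s` carries `(t, y)` to `(1 - t, 1 - y)`. Together with `β = -γ` this forces
each coefficient of the equation, evaluated along the curve, to be a power of `s` times a rational
function of `s²`, with denominator a product of the factors `s² ± 1`, `4s² - 1` and `9s² - 1`; the
slope `dy/dt` is itself a function of `s²`. After clearing denominators the equation is a single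
polynomial identity in `s²`.
-/

/-- The right-hand side of the sixth Painlevé equation, solved for `d²y/dt²`, with parameters
`α, β, γ, δ`, as a function of the independent variable `t`, the value `y` and the slope
`p = dy/dt`. -/
def painleveSixRHS {K : Type*} [Field K] (α β γ δ t y p : K) : K :=
  (1 / 2) * (1 / y + 1 / (y - 1) + 1 / (y - t)) * p ^ 2
    - (1 / t + 1 / (t - 1) + 1 / (y - t)) * p
    + (y * (y - 1) * (y - t) / (t ^ 2 * (t - 1) ^ 2)) *
      (α + β * t / y ^ 2 + γ * (t - 1) / (y - 1) ^ 2 + δ * t * (t - 1) / (y - t) ^ 2)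

/-- The closed form of the slope `dy/dt` along the curve `s ↦ (tFun10 s, yFun10 s)`. -/
noncomputable def slopeFun10 (s : ℂ) : ℂ :=
  2 * s ^ 2 * (1 + 2 * s ^ 2 - 39 * s ^ 4) /
    (3 * (s ^ 2 + 1) ^ 2 * (s ^ 2 - 1) * (4 * s ^ 2 - 1))

/-- The closed form of the second derivative `d²y/dt²` along the curve
`s ↦ (tFun10 s, yFun10 s)`. -/
noncomputable def secondSlopeFun10 (s : ℂ) : ℂ :=
  32 * s ^ 5 * (3 * s ^ 2 - 1) ^ 2 *
      (1 + 3 * s ^ 2 - 121 * s ^ 4 + 349 * s ^ 6 - 172 * s ^ 8 + 156 * s ^ 10) /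
    (9 * (s ^ 2 + 1) ^ 3 * (s ^ 2 - 1) ^ 5 * (4 * s ^ 2 - 1) ^ 3)

theorem one_div_add_one_div_sub_one {K : Type*} [Field K] {x : K} (hx : x * (x - 1) ≠ 0) :
    1 / x + 1 / (x - 1) = (2 * x - 1) / (x * (x - 1)) := by
  field_simp (disch := grind)
  ring

section ParametricCurve

variable {s : ℂ}

theorem tFun10_neg (hs : s ≠ 0) (hA : 3 * s ^ 2 - 1 ≠ 0) : tFun10 (-s) = 1 - tFun10 s := by
  simp only [tFun10, neg_sq]
  field_simp (disch := grind)
  ring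

theorem yFun10_neg (hs : s ≠ 0) (hA : 3 * s ^ 2 - 1 ≠ 0) (hB : s ^ 2 + 1 ≠ 0) :
    yFun10 (-s) = 1 - yFun10 s := by
  simp only [yFun10, neg_sq]
  field_simp (disch := grind)
  ring

theorem tFun10_sub_one (hs : s ≠ 0) (hA : 3 * s ^ 2 - 1 ≠ 0) : tFun10 s - 1 = -tFun10 (-s) := by
  rw [tFun10_neg hs hA, neg_sub]

theorem yFun10_sub_one (hs : s ≠ 0) (hA : 3 * s ^ 2 - 1 ≠ 0) (hB : s ^ 2 + 1 ≠ 0) :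
    yFun10 s - 1 = -yFun10 (-s) := by
  rw [yFun10_neg hs hA hB, neg_sub]

theorem tFun10_mul_sub_one (hs : s ≠ 0) (hA : 3 * s ^ 2 - 1 ≠ 0) :
    tFun10 s * (tFun10 s - 1) =
      (s ^ 2 - 1) ^ 4 * (4 * s ^ 2 - 1) ^ 2 / (64 * s ^ 6 * (3 * s ^ 2 - 1) ^ 2) := by
  rw [tFun10_sub_one hs hA]
  simp only [tFun10, neg_sq]
  field_simp (disch := grind)
  ring

theorem yFun10_mul_sub_one (hs : s ≠ 0) (hA : 3 * s ^ 2 - 1 ≠ 0) (hB : s ^ 2 + 1 ≠ 0) :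
    yFun10 s * (yFun10 s - 1) =
      -((9 * s ^ 2 - 1) * (4 * s ^ 2 - 1) * (s ^ 2 - 1) ^ 3) /
        (16 * s ^ 2 * (3 * s ^ 2 - 1) ^ 2 * (s ^ 2 + 1) ^ 2) := by
  rw [yFun10_sub_one hs hA hB]
  simp only [yFun10, neg_sq]
  field_simp (disch := grind)
  ring

theorem yFun10_sub_tFun10 (hs : s ≠ 0) (hA : 3 * s ^ 2 - 1 ≠ 0) (hB : s ^ 2 + 1 ≠ 0) :
    yFun10 s - tFun10 s =
      -((s ^ 2 - 1) ^ 3 * (4 * s ^ 2 - 1)) /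
        (8 * s ^ 3 * (3 * s ^ 2 - 1) * (s ^ 2 + 1)) := by
  simp only [yFun10, tFun10]
  field_simp (disch := grind)
  ring

theorem two_mul_tFun10_sub_one (hs : s ≠ 0) (hA : 3 * s ^ 2 - 1 ≠ 0) :
    2 * tFun10 s - 1 =
      (4 * s ^ 6 + 9 * s ^ 4 - 6 * s ^ 2 + 1) / (4 * s ^ 3 * (3 * s ^ 2 - 1)) := by
  simp only [tFun10]
  field_simp (disch := grind)
  ring

theorem two_mul_yFun10_sub_one (hs : s ≠ 0) (hA : 3 * s ^ 2 - 1 ≠ 0) (hB : s ^ 2 + 1 ≠ 0) :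
    2 * yFun10 s - 1 =
      (13 * s ^ 4 - 6 * s ^ 2 + 1) / (2 * s * (3 * s ^ 2 - 1) * (s ^ 2 + 1)) := by
  simp only [yFun10]
  field_simp (disch := grind)
  ring

theorem factors_ne_zero_of_yFun10_ne (hs : s ≠ 0) (hA : 3 * s ^ 2 - 1 ≠ 0) (hB : s ^ 2 + 1 ≠ 0)
    (hy0 : yFun10 s ≠ 0) (hy1 : yFun10 s ≠ 1) :
    s ^ 2 - 1 ≠ 0 ∧ 4 * s ^ 2 - 1 ≠ 0 ∧ 9 * s ^ 2 - 1 ≠ 0 := by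
  have hy : yFun10 s * (yFun10 s - 1) ≠ 0 := mul_ne_zero hy0 (sub_ne_zero.mpr hy1)
  rw [yFun10_mul_sub_one hs hA hB] at hy
  refine ⟨?_, ?_, ?_⟩ <;> exact fun h => hy (by simp [h])

theorem hasDerivAt_tFun10 (hs : s ≠ 0) (hA : 3 * s ^ 2 - 1 ≠ 0) :
    HasDerivAt tFun10
      (3 * (s ^ 2 - 1) ^ 3 * (4 * s ^ 2 - 1) / (8 * s ^ 4 * (3 * s ^ 2 - 1) ^ 2)) s := by
  have hid := hasDerivAt_id' s
  have hnum := ((hid.add_const 1).fun_pow 4).fun_mul (((hid.const_mul 2).sub_const 1).fun_pow 2)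
  have hden := ((hid.fun_pow 3).const_mul 8).fun_mul (((hid.fun_pow 2).const_mul 3).sub_const 1)
  refine (hnum.fun_div hden (by simp [hs, hA])).congr_deriv ?_
  field_simp (disch := grind)
  ring

theorem hasDerivAt_yFun10 (hs : s ≠ 0) (hA : 3 * s ^ 2 - 1 ≠ 0) (hB : s ^ 2 + 1 ≠ 0) :
    HasDerivAt yFun10
      ((s ^ 2 - 1) ^ 2 * (1 + 2 * s ^ 2 - 39 * s ^ 4) /
        (4 * s ^ 2 * (3 * s ^ 2 - 1) ^ 2 * (s ^ 2 + 1) ^ 2)) s := by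
  have hid := hasDerivAt_id' s
  have hnum := (((hid.const_mul 3).sub_const 1).fun_mul ((hid.const_mul 2).sub_const 1)).fun_mul
    ((hid.add_const 1).fun_pow 3)
  have hden := ((hid.const_mul 4).fun_mul (((hid.fun_pow 2).const_mul 3).sub_const 1)).fun_mul
    ((hid.fun_pow 2).add_const 1)
  refine (hnum.fun_div hden (by simp [hs, hA, hB])).congr_deriv ?_
  field_simp (disch := grind)
  ring

theorem hasDerivAt_slopeFun10 (hB : s ^ 2 + 1 ≠ 0) (hC : s ^ 2 - 1 ≠ 0)
    (hD : 4 * s ^ 2 - 1 ≠ 0) :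
    HasDerivAt slopeFun10
      (4 * s * (1 + 3 * s ^ 2 - 121 * s ^ 4 + 349 * s ^ 6 - 172 * s ^ 8 + 156 * s ^ 10) /
        (3 * (s ^ 2 + 1) ^ 3 * (s ^ 2 - 1) ^ 2 * (4 * s ^ 2 - 1) ^ 2)) s := by
  have hid := hasDerivAt_id' s
  have hnum := ((hid.fun_pow 2).const_mul 2).fun_mul
    ((((hid.fun_pow 2).const_mul 2).const_add 1).fun_sub ((hid.fun_pow 4).const_mul 39))
  have hden := (((((hid.fun_pow 2).add_const 1).fun_pow 2).const_mul 3).fun_mul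
    ((hid.fun_pow 2).sub_const 1)).fun_mul (((hid.fun_pow 2).const_mul 4).sub_const 1)
  refine (hnum.fun_div hden (by simp [hB, hC, hD])).congr_deriv ?_
  field_simp (disch := grind)
  ring

theorem deriv_yFun10_div_deriv_tFun10 (hs : s ≠ 0) (hA : 3 * s ^ 2 - 1 ≠ 0)
    (hB : s ^ 2 + 1 ≠ 0) (hC : s ^ 2 - 1 ≠ 0) (hD : 4 * s ^ 2 - 1 ≠ 0) :
    deriv yFun10 s / deriv tFun10 s = slopeFun10 s := by
  rw [(hasDerivAt_yFun10 hs hA hB).deriv, (hasDerivAt_tFun10 hs hA).deriv, slopeFun10]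
  field_simp (disch := grind)
  ring

theorem eventually_deriv_yFun10_div_deriv_tFun10 (hs : s ≠ 0) (hA : 3 * s ^ 2 - 1 ≠ 0)
    (hB : s ^ 2 + 1 ≠ 0) (hC : s ^ 2 - 1 ≠ 0) (hD : 4 * s ^ 2 - 1 ≠ 0) :
    (fun u => deriv yFun10 u / deriv tFun10 u) =ᶠ[nhds s] slopeFun10 := by
  have eventually_ne {f : ℂ → ℂ} (hf : Continuous f) (hfs : f s ≠ 0) : ∀ᶠ u in nhds s, f u ≠ 0 :=
    hf.continuousAt.eventually_ne hfs
  filter_upwards [eventually_ne continuous_id hs,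
    eventually_ne (f := fun u => 3 * u ^ 2 - 1) (by fun_prop) hA,
    eventually_ne (f := fun u => u ^ 2 + 1) (by fun_prop) hB,
    eventually_ne (f := fun u => u ^ 2 - 1) (by fun_prop) hC,
    eventually_ne (f := fun u => 4 * u ^ 2 - 1) (by fun_prop) hD] with u hu hAu hBu hCu hDu
  exact deriv_yFun10_div_deriv_tFun10 hu hAu hBu hCu hDu

theorem deriv_slope_div_deriv_tFun10 (hs : s ≠ 0) (hA : 3 * s ^ 2 - 1 ≠ 0)
    (hB : s ^ 2 + 1 ≠ 0) (hC : s ^ 2 - 1 ≠ 0) (hD : 4 * s ^ 2 - 1 ≠ 0) :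
    deriv (fun u => deriv yFun10 u / deriv tFun10 u) s / deriv tFun10 s =
      secondSlopeFun10 s := by
  rw [(eventually_deriv_yFun10_div_deriv_tFun10 hs hA hB hC hD).deriv_eq,
    (hasDerivAt_slopeFun10 hB hC hD).deriv, (hasDerivAt_tFun10 hs hA).deriv, secondSlopeFun10]
  field_simp (disch := grind)
  ring

theorem painleveSix_slope_sq_coeff (hs : s ≠ 0) (hA : 3 * s ^ 2 - 1 ≠ 0) (hB : s ^ 2 + 1 ≠ 0)
    (hy0 : yFun10 s ≠ 0) (hy1 : yFun10 s ≠ 1) :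
    1 / yFun10 s + 1 / (yFun10 s - 1) + 1 / (yFun10 s - tFun10 s) =
      -(8 * s * (3 * s ^ 2 - 1) * (s ^ 2 + 1) * (22 * s ^ 4 - 7 * s ^ 2 + 1)) /
        ((9 * s ^ 2 - 1) * (4 * s ^ 2 - 1) * (s ^ 2 - 1) ^ 3) := by
  obtain ⟨hC, hD, hE⟩ := factors_ne_zero_of_yFun10_ne hs hA hB hy0 hy1
  rw [one_div_add_one_div_sub_one (mul_ne_zero hy0 (sub_ne_zero.mpr hy1)),
    two_mul_yFun10_sub_one hs hA hB, yFun10_mul_sub_one hs hA hB, yFun10_sub_tFun10 hs hA hB]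
  field_simp (disch := grind)
  ring

theorem painleveSix_slope_coeff (hs : s ≠ 0) (hA : 3 * s ^ 2 - 1 ≠ 0) (hB : s ^ 2 + 1 ≠ 0)
    (hC : s ^ 2 - 1 ≠ 0) (hD : 4 * s ^ 2 - 1 ≠ 0) :
    1 / tFun10 s + 1 / (tFun10 s - 1) + 1 / (yFun10 s - tFun10 s) =
      8 * s ^ 3 * (3 * s ^ 2 - 1) * (4 * s ^ 6 + 19 * s ^ 4 - 8 * s ^ 2 + 1) /
        ((s ^ 2 - 1) ^ 4 * (4 * s ^ 2 - 1) ^ 2) := by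
  have ht : tFun10 s * (tFun10 s - 1) ≠ 0 := by
    simp [tFun10_mul_sub_one hs hA, hs, hA, hC, hD]
  rw [one_div_add_one_div_sub_one ht, two_mul_tFun10_sub_one hs hA,
    tFun10_mul_sub_one hs hA, yFun10_sub_tFun10 hs hA hB]
  field_simp (disch := grind)
  ring

theorem painleveSix_potential_prefactor (hs : s ≠ 0) (hA : 3 * s ^ 2 - 1 ≠ 0) (hB : s ^ 2 + 1 ≠ 0)
    (hC : s ^ 2 - 1 ≠ 0) (hD : 4 * s ^ 2 - 1 ≠ 0) :
    yFun10 s * (yFun10 s - 1) * (yFun10 s - tFun10 s) / (tFun10 s ^ 2 * (tFun10 s - 1) ^ 2) =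
      32 * s ^ 7 * (3 * s ^ 2 - 1) * (9 * s ^ 2 - 1) /
        ((s ^ 2 - 1) ^ 2 * (4 * s ^ 2 - 1) ^ 2 * (s ^ 2 + 1) ^ 3) := by
  rw [← mul_pow, tFun10_mul_sub_one hs hA, yFun10_mul_sub_one hs hA hB,
    yFun10_sub_tFun10 hs hA hB]
  field_simp (disch := grind)
  ring

theorem tFun10_div_yFun10_sq (hs : s ≠ 0) (hA : 3 * s ^ 2 - 1 ≠ 0) (hB : s ^ 2 + 1 ≠ 0)
    (hy0 : yFun10 s ≠ 0) :
    tFun10 s / yFun10 s ^ 2 =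
      2 * (3 * s ^ 2 - 1) * (s ^ 2 + 1) ^ 2 / (s * ((3 * s - 1) * (s + 1)) ^ 2) := by
  obtain ⟨⟨h3, h2⟩, h1⟩ : (3 * s - 1 ≠ 0 ∧ 2 * s - 1 ≠ 0) ∧ s + 1 ≠ 0 := by
    simpa [yFun10, hs, hA, hB] using hy0
  simp only [tFun10, yFun10]
  field_simp (disch := grind)
  ring

theorem tFun10_sub_one_div_yFun10_sub_one_sq (hs : s ≠ 0) (hA : 3 * s ^ 2 - 1 ≠ 0)
    (hB : s ^ 2 + 1 ≠ 0) (hy1 : yFun10 s ≠ 1) :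
    (tFun10 s - 1) / (yFun10 s - 1) ^ 2 =
      2 * (3 * s ^ 2 - 1) * (s ^ 2 + 1) ^ 2 / (s * ((3 * s + 1) * (s - 1)) ^ 2) := by
  have hy_neg : yFun10 (-s) ≠ 0 := by
    rw [yFun10_neg hs hA hB]
    exact sub_ne_zero.mpr hy1.symm
  have h := tFun10_div_yFun10_sq (neg_ne_zero.mpr hs) (by rwa [neg_sq]) (by rwa [neg_sq]) hy_neg
  rw [tFun10_sub_one hs hA, yFun10_sub_one hs hA hB, neg_sq, neg_div, h,
    show (3 * -s - 1) * (-s + 1) = (3 * s + 1) * (s - 1) by ring, neg_sq, neg_mul, div_neg, neg_neg]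

theorem tFun10_mul_sub_one_div_sub_sq (hs : s ≠ 0) (hA : 3 * s ^ 2 - 1 ≠ 0)
    (hB : s ^ 2 + 1 ≠ 0) (hC : s ^ 2 - 1 ≠ 0) (hD : 4 * s ^ 2 - 1 ≠ 0) :
    tFun10 s * (tFun10 s - 1) / (yFun10 s - tFun10 s) ^ 2 =
      (s ^ 2 + 1) ^ 2 / (s ^ 2 - 1) ^ 2 := by
  rw [tFun10_mul_sub_one hs hA, yFun10_sub_tFun10 hs hA hB]
  field_simp (disch := grind)
  ring

theorem tFun10_sub_one_div_sq_sub_tFun10_div_sq (hs : s ≠ 0) (hA : 3 * s ^ 2 - 1 ≠ 0)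
    (hB : s ^ 2 + 1 ≠ 0) (hy0 : yFun10 s ≠ 0) (hy1 : yFun10 s ≠ 1) :
    (tFun10 s - 1) / (yFun10 s - 1) ^ 2 - tFun10 s / yFun10 s ^ 2 =
      16 * (3 * s ^ 2 - 1) ^ 2 * (s ^ 2 + 1) ^ 2 / ((9 * s ^ 2 - 1) ^ 2 * (s ^ 2 - 1) ^ 2) := by
  obtain ⟨hC, -, hE⟩ := factors_ne_zero_of_yFun10_ne hs hA hB hy0 hy1
  have hC_factor : s ^ 2 - 1 = (s + 1) * (s - 1) := by ring
  have hE_factor : 9 * s ^ 2 - 1 = (3 * s - 1) * (3 * s + 1) := by ring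
  rw [tFun10_sub_one_div_yFun10_sub_one_sq hs hA hB hy1, tFun10_div_yFun10_sq hs hA hB hy0,
    hC_factor, hE_factor]
  field_simp (disch := grind)
  ring

theorem painleveSix_potential_of_beta_eq_neg_gamma (α γ δ : ℂ) (hs : s ≠ 0)
    (hA : 3 * s ^ 2 - 1 ≠ 0) (hB : s ^ 2 + 1 ≠ 0) (hy0 : yFun10 s ≠ 0) (hy1 : yFun10 s ≠ 1) :
    α + -γ * tFun10 s / yFun10 s ^ 2 + γ * (tFun10 s - 1) / (yFun10 s - 1) ^ 2
        + δ * tFun10 s * (tFun10 s - 1) / (yFun10 s - tFun10 s) ^ 2 =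
      α + γ * (16 * (3 * s ^ 2 - 1) ^ 2 * (s ^ 2 + 1) ^ 2 /
          ((9 * s ^ 2 - 1) ^ 2 * (s ^ 2 - 1) ^ 2))
        + δ * ((s ^ 2 + 1) ^ 2 / (s ^ 2 - 1) ^ 2) := by
  obtain ⟨hC, hD, -⟩ := factors_ne_zero_of_yFun10_ne hs hA hB hy0 hy1
  rw [← tFun10_sub_one_div_sq_sub_tFun10_div_sq hs hA hB hy0 hy1,
    ← tFun10_mul_sub_one_div_sub_sq hs hA hB hC hD]
  ring

theorem painleveSixRHS_tFun10_yFun10 (hs : s ≠ 0) (hA : 3 * s ^ 2 - 1 ≠ 0)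
    (hB : s ^ 2 + 1 ≠ 0) (hy0 : yFun10 s ≠ 0) (hy1 : yFun10 s ≠ 1) :
    painleveSixRHS (2 / 9) (-1 / 32) (1 / 32) (4 / 9) (tFun10 s) (yFun10 s) (slopeFun10 s) =
      secondSlopeFun10 s := by
  obtain ⟨hC, hD, hE⟩ := factors_ne_zero_of_yFun10_ne hs hA hB hy0 hy1
  rw [painleveSixRHS, slopeFun10, secondSlopeFun10,
    painleveSix_slope_sq_coeff hs hA hB hy0 hy1,
    painleveSix_slope_coeff hs hA hB hC hD,
    painleveSix_potential_prefactor hs hA hB hC hD, neg_div 32 (1 : ℂ),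
    painleveSix_potential_of_beta_eq_neg_gamma _ _ _ hs hA hB hy0 hy1]
  field_simp (disch := grind)
  ring

end ParametricCurve

/-- Parametric algebraic solution of the sixth Painlevé equation. -/
theorem stmt_10 (s : ℂ)
    (h1 : s ≠ 0)
    (h2 : 3*s^2-1 ≠ 0)
    (h3 : s^2+1 ≠ 0)
    (hdt : deriv tFun10 s ≠ 0)
    (ht0 : tFun10 s ≠ 0) (ht1 : tFun10 s ≠ 1)
    (hy0 : yFun10 s ≠ 0) (hy1 : yFun10 s ≠ 1) (hyt : yFun10 s ≠ tFun10 s) :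
    deriv (fun u => deriv yFun10 u / deriv tFun10 u) s / deriv tFun10 s =
      (1/2) * (1/(yFun10 s) + 1/(yFun10 s - 1) + 1/(yFun10 s - tFun10 s)) *
          (deriv yFun10 s / deriv tFun10 s)^2
        - (1/(tFun10 s) + 1/(tFun10 s - 1) + 1/(yFun10 s - tFun10 s)) *
          (deriv yFun10 s / deriv tFun10 s)
        + (yFun10 s * (yFun10 s - 1) * (yFun10 s - tFun10 s) /
            ((tFun10 s)^2 * (tFun10 s - 1)^2)) *
          ((2/9 : ℂ) + (-1/32 : ℂ) * tFun10 s / (yFun10 s)^2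
            + (1/32 : ℂ) * (tFun10 s - 1) / (yFun10 s - 1)^2
            + (4/9 : ℂ) * tFun10 s * (tFun10 s - 1) / (yFun10 s - tFun10 s)^2) := by
  obtain ⟨hC, hD, -⟩ := factors_ne_zero_of_yFun10_ne h1 h2 h3 hy0 hy1
  change _ = painleveSixRHS (2 / 9) (-1 / 32) (1 / 32) (4 / 9) (tFun10 s) (yFun10 s)
    (deriv yFun10 s / deriv tFun10 s)
  rw [deriv_slope_div_deriv_tFun10 h1 h2 h3 hC hD, deriv_yFun10_div_deriv_tFun10 h1 h2 h3 hC hD,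
    painleveSixRHS_tFun10_yFun10 h1 h2 h3 hy0 hy1]
end
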